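/- Let V be a real vector space, ℓ : V → ℝ a linear map, and c : V → ℝ a function satisfying the cocycle equation c(z₁+z₂) = e^{ℓ(z₂)}c(z₁) + c(z₂) for all z₁,z₂ ∈ V. If ℓ ≠ 0, then there exists c₀ ∈ ℝ such that c(z) = c₀(e^{ℓ(z)} − 1) for all z ∈ V. -/

import Mathlib

theorem sub_one_smul_comm_of_cocycle {A R M : Type*} [AddCommMagma A] [Ring R]
    [AddCommGroup M] [Module R M] {χ : A → R} {c : A → M}
    (hc : ∀ a b, c (a + b) = χ b • c a + c b) (a b : A) :
    (χ b - 1) • c a = (χ a - 1) • c b := by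
  have hsymm : χ b • c a + c b = χ a • c b + c a := by
    rw [← hc a b, ← hc b a, add_comm]
  rw [sub_smul, sub_smul, one_smul, one_smul, sub_eq_sub_iff_add_eq_add, hsymm]

theorem isUnit_exp_sub_one_iff {x : ℝ} : IsUnit (Real.exp x - 1) ↔ x ≠ 0 := by
  rw [isUnit_iff_ne_zero, sub_ne_zero, Ne, Real.exp_eq_one_iff]

theorem stmt8_general {A R M : Type*} [AddCommMagma A] [CommRing R]
    [AddCommGroup M] [Module R M] {χ : A → R} {c : A → M}
    (hc : ∀ a b, c (a + b) = χ b • c a + c b) {w : A} (hw : IsUnit (χ w - 1)) :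
    ∃ c₀ : M, ∀ a, c a = (χ a - 1) • c₀ := by
  obtain ⟨u, hu⟩ := hw
  refine ⟨u⁻¹ • c w, fun a => ?_⟩
  calc
    c a = u⁻¹ • (χ w - 1) • c a := by rw [← hu, ← Units.smul_def, inv_smul_smul]
    _ = u⁻¹ • (χ a - 1) • c w := by rw [sub_one_smul_comm_of_cocycle hc a w]
    _ = (χ a - 1) • u⁻¹ • c w := smul_comm _ _ _

/-- If ℓ : V → ℝ is a nonzero linear functional and c satisfies the cocycle
equation c(z₁+z₂) = e^{ℓ(z₂)} c(z₁) + c(z₂), then c(z) = c₀(e^{ℓ(z)} - 1) for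
some constant c₀. -/
theorem stmt8 (V : Type*) [AddCommGroup V] [Module ℝ V]
    (ℓ : V →ₗ[ℝ] ℝ) (hℓ : ℓ ≠ 0) (c : V → ℝ)
    (hc : ∀ z₁ z₂ : V, c (z₁ + z₂) = Real.exp (ℓ z₂) * c z₁ + c z₂) :
    ∃ c₀ : ℝ, ∀ z : V, c z = c₀ * (Real.exp (ℓ z) - 1) := by
  obtain ⟨w, hw⟩ := DFunLike.ne_iff.mp hℓ
  simpa only [smul_eq_mul, mul_comm] using
    stmt8_general (χ := fun z => Real.exp (ℓ z)) hc (isUnit_exp_sub_one_iff.mpr hw)
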